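/- Let N be an odd Niemeier lattice of minimum norm 2 whose two even neighbors have root sublattices isometric to D₁₂⊕D₁₂ and A₁₂⊕A₁₂ respectively. Then N does not contain a sublattice isometric to L⁺. -/

import Mathlib

open scoped BigOperators

namespace Niemeier

variable {V : Type*} [AddCommGroup V] [Module ℚ V]
variable {W : Type*} [AddCommGroup W] [Module ℚ W]

/-- The dual lattice of a `ℤ`-submodule `L` of a rational vector space `V` with respect to the
bilinear form `B`: all vectors pairing integrally with every element of `L`. -/
def dualLattice (B : V →ₗ[ℚ] V →ₗ[ℚ] ℚ) (L : Submodule ℤ V) : Submodule ℤ V where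
  carrier := {x | ∀ y ∈ L, ∃ n : ℤ, B x y = n}
  zero_mem' := by
    intro y hy
    exact ⟨0, by simp⟩
  add_mem' := by
    intro a b ha hb y hy
    obtain ⟨m, hm⟩ := ha y hy
    obtain ⟨k, hk⟩ := hb y hy
    exact ⟨m + k, by push_cast [map_add, LinearMap.add_apply, hm, hk]; rfl⟩
  smul_mem' := by
    intro c x hx y hy
    obtain ⟨m, hm⟩ := hx y hy
    refine ⟨c * m, ?_⟩
    have h1 : B (c • x) y = c • (B x y) := by
      rw [map_zsmul]; rfl
    rw [h1, hm, zsmul_eq_mul]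
    push_cast
    ring

/-- `B` is a symmetric positive-definite bilinear form. -/
def IsPosDefSymm (B : V →ₗ[ℚ] V →ₗ[ℚ] ℚ) : Prop :=
  (∀ x y, B x y = B y x) ∧ ∀ x : V, x ≠ 0 → 0 < B x x

/-- `L` is a (full-rank, integral) lattice in `V` with respect to `B`. -/
structure IsIntegralLattice (B : V →ₗ[ℚ] V →ₗ[ℚ] ℚ) (L : Submodule ℤ V) : Prop where
  fg : L.FG
  spans : Submodule.span ℚ (L : Set V) = ⊤
  integral : L ≤ dualLattice B L

/-- `L` is unimodular: it coincides with its dual lattice. -/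
def IsUnimodular (B : V →ₗ[ℚ] V →ₗ[ℚ] ℚ) (L : Submodule ℤ V) : Prop :=
  L = dualLattice B L

/-- `L` is an even lattice: all norms are even integers. -/
def IsEvenLat (B : V →ₗ[ℚ] V →ₗ[ℚ] ℚ) (L : Submodule ℤ V) : Prop :=
  ∀ v ∈ L, ∃ n : ℤ, B v v = 2 * n

/-- `L` is an odd lattice: some vector has odd (integer) norm. -/
def IsOddLat (B : V →ₗ[ℚ] V →ₗ[ℚ] ℚ) (L : Submodule ℤ V) : Prop :=
  ∃ v ∈ L, ∃ n : ℤ, B v v = 2 * n + 1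

/-- An odd Niemeier lattice: an odd positive-definite unimodular integral lattice of rank 24
(positive-definiteness of `B` is a separate hypothesis). -/
def IsOddNiemeier (B : V →ₗ[ℚ] V →ₗ[ℚ] ℚ) (N : Submodule ℤ V) : Prop :=
  IsIntegralLattice B N ∧ IsUnimodular B N ∧ IsOddLat B N ∧ Module.finrank ℚ V = 24

/-- `D` is a subgroup of index two in `L`. -/
def IndexTwo (D L : Submodule ℤ V) : Prop :=
  D ≤ L ∧ ∃ a ∈ L, a ∉ D ∧ ∀ x ∈ L, x ∈ D ∨ x - a ∈ D

/-- Two lattices are neighbors if their intersection has index two in each of them. -/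
def Neighbors (L M : Submodule ℤ V) : Prop :=
  IndexTwo (L ⊓ M) L ∧ IndexTwo (L ⊓ M) M

/-- `E` is an even neighbor of the odd Niemeier lattice `N`: an even unimodular integral
lattice (in the same ambient space) which is a neighbor of `N`. -/
def IsEvenNeighbor (B : V →ₗ[ℚ] V →ₗ[ℚ] ℚ) (N E : Submodule ℤ V) : Prop :=
  IsIntegralLattice B E ∧ IsUnimodular B E ∧ IsEvenLat B E ∧ Neighbors N E

/-- The minimum norm of `L` equals `m`. -/
def HasMinNorm (B : V →ₗ[ℚ] V →ₗ[ℚ] ℚ) (L : Submodule ℤ V) (m : ℚ) : Prop :=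
  (∃ v ∈ L, v ≠ 0 ∧ B v v = m) ∧ ∀ v ∈ L, v ≠ 0 → m ≤ B v v

/-- `N` contains a sublattice isometric to the rank-6 lattice `L⁺`, i.e. there are vectors
`h, a 0, …, a 4` in `N` realizing the Gram matrix of `L⁺`. -/
def ContainsLPlus (B : V →ₗ[ℚ] V →ₗ[ℚ] ℚ) (N : Submodule ℤ V) : Prop :=
  ∃ h ∈ N, ∃ a : Fin 5 → V, (∀ i, a i ∈ N) ∧
    B h h = 2 ∧ (∀ i, B h (a i) = 1) ∧ (∀ i, B (a i) (a i) = 3) ∧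
    ∀ i j, i ≠ j → B (a i) (a j) = 0

/-- Two lattices (in possibly different ambient spaces, with forms `B` and `C`) are isometric:
there is a `ℤ`-linear bijection between them preserving the bilinear forms. -/
def LatticeIsometric (B : V → V → ℚ) (C : W → W → ℚ)
    (L : Submodule ℤ V) (M : Submodule ℤ W) : Prop :=
  ∃ f : L ≃ₗ[ℤ] M, ∀ x y : L, C (f x) (f y) = B x y

/-- The standard dot product on `ℚⁿ`. -/
def stdDot (n : ℕ) : (Fin n → ℚ) → (Fin n → ℚ) → ℚ := fun x y => ∑ i, x i * y i

/-- The orthogonal sum of two bilinear forms. -/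
def prodForm (B : V → V → ℚ) (C : W → W → ℚ) : V × W → V × W → ℚ :=
  fun p q => B p.1 q.1 + C p.2 q.2

/-- A vector in `ℚⁿ` has integer coordinates. -/
def IsIntVec {n : ℕ} (x : Fin n → ℚ) : Prop := ∀ i, ∃ m : ℤ, x i = m

/-- The root lattice `Dₙ = {x ∈ ℤⁿ : ∑ xᵢ even}`. -/
def latD (n : ℕ) : Submodule ℤ (Fin n → ℚ) where
  carrier := {x | IsIntVec x ∧ ∃ k : ℤ, ∑ i, x i = 2 * k}
  zero_mem' := by
    refine ⟨fun i => ⟨0, by simp⟩, 0, by simp⟩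
  add_mem' := by
    rintro a b ⟨ha, k₁, hk₁⟩ ⟨hb, k₂, hk₂⟩
    refine ⟨fun i => ?_, k₁ + k₂, ?_⟩
    · obtain ⟨m, hm⟩ := ha i
      obtain ⟨m', hm'⟩ := hb i
      exact ⟨m + m', by simp [Pi.add_apply, hm, hm']⟩
    · simp only [Pi.add_apply, Finset.sum_add_distrib, hk₁, hk₂]
      push_cast
      ring
  smul_mem' := by
    rintro c x ⟨hx, k, hk⟩
    refine ⟨fun i => ?_, c * k, ?_⟩
    · obtain ⟨m, hm⟩ := hx i
      exact ⟨c * m, by simp [Pi.smul_apply, hm, zsmul_eq_mul]⟩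
    · have : ∑ i, (c • x) i = c • ∑ i, x i := by
        simp [Pi.smul_apply, Finset.smul_sum]
      rw [this, hk, zsmul_eq_mul]
      push_cast
      ring

/-- The root lattice `Aₙ = {x ∈ ℤⁿ⁺¹ : ∑ xᵢ = 0}`. -/
def latA (n : ℕ) : Submodule ℤ (Fin (n + 1) → ℚ) where
  carrier := {x | IsIntVec x ∧ ∑ i, x i = 0}
  zero_mem' := ⟨fun i => ⟨0, by simp⟩, by simp⟩
  add_mem' := by
    rintro a b ⟨ha, hka⟩ ⟨hb, hkb⟩
    refine ⟨fun i => ?_, ?_⟩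
    · obtain ⟨m, hm⟩ := ha i
      obtain ⟨m', hm'⟩ := hb i
      exact ⟨m + m', by simp [Pi.add_apply, hm, hm']⟩
    · simp [Pi.add_apply, Finset.sum_add_distrib, hka, hkb]
  smul_mem' := by
    rintro c x ⟨hx, hk⟩
    refine ⟨fun i => ?_, ?_⟩
    · obtain ⟨m, hm⟩ := hx i
      exact ⟨c * m, by simp [Pi.smul_apply, hm, zsmul_eq_mul]⟩
    · have : ∑ i, (c • x) i = c • ∑ i, x i := by
        simp [Pi.smul_apply, Finset.smul_sum]
      rw [this, hk, smul_zero]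

/-- The root lattice `E₈ = D₈ + ℤ·(½,…,½)`. -/
def latE8 : Submodule ℤ (Fin 8 → ℚ) :=
  latD 8 ⊔ Submodule.span ℤ {fun _ => (1 : ℚ) / 2}

/-- The root sublattice of `E`: the `ℤ`-span of its vectors of norm 2. -/
def rootSublattice (B : V →ₗ[ℚ] V →ₗ[ℚ] ℚ) (E : Submodule ℤ V) : Submodule ℤ V :=
  Submodule.span ℤ {v : V | v ∈ E ∧ B v v = 2}

/-- The set of even-norm vectors of `N` (the even sublattice, as a set). -/
def evenSet (B : V →ₗ[ℚ] V →ₗ[ℚ] ℚ) (N : Submodule ℤ V) : Set V :=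
  {x | x ∈ N ∧ ∃ n : ℤ, B x x = 2 * n}

/-- The unordered pair of root sublattices of `E₁` and `E₂` is isometric to the pair
`(M₁, M₂)`. -/
def RootPairIso {W₁ W₂ : Type*} [AddCommGroup W₁] [Module ℚ W₁]
    [AddCommGroup W₂] [Module ℚ W₂]
    (B : V →ₗ[ℚ] V →ₗ[ℚ] ℚ) (E₁ E₂ : Submodule ℤ V)
    (C₁ : W₁ → W₁ → ℚ) (M₁ : Submodule ℤ W₁)
    (C₂ : W₂ → W₂ → ℚ) (M₂ : Submodule ℤ W₂) : Prop :=
  (LatticeIsometric (fun x y => B x y) C₁ (rootSublattice B E₁) M₁ ∧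
    LatticeIsometric (fun x y => B x y) C₂ (rootSublattice B E₂) M₂) ∨
  (LatticeIsometric (fun x y => B x y) C₂ (rootSublattice B E₁) M₂ ∧
    LatticeIsometric (fun x y => B x y) C₁ (rootSublattice B E₂) M₁)

/-- The unordered pair of root sublattices of `E₁`, `E₂` is one of the four exceptional pairs
`{E₈³, D₈³}`, `{D₁₆⊕E₈, A₁₅⊕D₉}`, `{D₁₂², A₁₂²}`, `{D₂₄, A₂₄}`. -/
def IsExceptionalPair (B : V →ₗ[ℚ] V →ₗ[ℚ] ℚ) (E₁ E₂ : Submodule ℤ V) : Prop :=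
  RootPairIso B E₁ E₂
    (prodForm (stdDot 8) (prodForm (stdDot 8) (stdDot 8))) (latE8.prod (latE8.prod latE8))
    (prodForm (stdDot 8) (prodForm (stdDot 8) (stdDot 8))) ((latD 8).prod ((latD 8).prod (latD 8))) ∨
  RootPairIso B E₁ E₂
    (prodForm (stdDot 16) (stdDot 8)) ((latD 16).prod latE8)
    (prodForm (stdDot 16) (stdDot 9)) ((latA 15).prod (latD 9)) ∨
  RootPairIso B E₁ E₂
    (prodForm (stdDot 12) (stdDot 12)) ((latD 12).prod (latD 12))
    (prodForm (stdDot 13) (stdDot 13)) ((latA 12).prod (latA 12)) ∨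
  RootPairIso B E₁ E₂
    (stdDot 24) (latD 24)
    (stdDot 25) (latA 24)

/-- Coordinates of a pair of vectors, indexed by a block and a position. -/
def pairCoord {n : ℕ} (y : (Fin n → ℚ) × (Fin n → ℚ)) (p : Fin 2 × Fin n) : ℚ :=
  if p.1 = 0 then y.1 p.2 else y.2 p.2

/-- The standard basis vector of a pair of coordinate spaces. -/
def pairBasis {n : ℕ} (p : Fin 2 × Fin n) : (Fin n → ℚ) × (Fin n → ℚ) :=
  if p.1 = 0 then (Pi.single p.2 1, 0) else (0, Pi.single p.2 1)

lemma prodForm_eq {n : ℕ} (x y : (Fin n → ℚ) × (Fin n → ℚ)) :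
    prodForm (stdDot n) (stdDot n) x y = ∑ p, pairCoord x p * pairCoord y p := by
  rw [Fintype.sum_prod_type]
  simp [prodForm, stdDot, pairCoord, Fin.sum_univ_two]

lemma pairCoord_basis {n : ℕ} (p q : Fin 2 × Fin n) :
    pairCoord (pairBasis p) q = if p = q then 1 else 0 := by
  obtain ⟨s, i⟩ := p
  obtain ⟨t, j⟩ := q
  fin_cases s <;> fin_cases t <;>
    simp [pairCoord, pairBasis, Pi.single_apply, eq_comm]

lemma pairCoord_ext {n : ℕ} {x y : (Fin n → ℚ) × (Fin n → ℚ)}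
    (h : ∀ p, pairCoord x p = pairCoord y p) : x = y := by
  apply Prod.ext
  · funext i
    simpa [pairCoord] using h (0, i)
  · funext i
    simpa [pairCoord] using h (1, i)

/-- Coordinates as an additive map. -/
def pairCoordHom {n : ℕ} (p : Fin 2 × Fin n) : (Fin n → ℚ) × (Fin n → ℚ) →+ ℚ where
  toFun y := pairCoord y p
  map_zero' := by simp [pairCoord]
  map_add' x y := by
    by_cases h : p.1 = 0 <;> simp [pairCoord, h]

lemma pairCoord_sum {n : ℕ} (y : (Fin n → ℚ) × (Fin n → ℚ)) (m : Fin 2 × Fin n → ℤ)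
    (hm : ∀ p, pairCoord y p = m p) : y = ∑ p, m p • pairBasis p := by
  apply pairCoord_ext
  intro q
  change _ = pairCoordHom q _
  rw [map_sum]
  have : ∀ p, pairCoordHom q (m p • pairBasis p) = if p = q then (m p : ℚ) else 0 := by
    intro p
    rw [map_zsmul]
    change m p • pairCoord (pairBasis p) q = _
    rw [pairCoord_basis]
    split_ifs <;> simp
  simp only [this, hm, Finset.sum_ite_eq', Finset.sum_ite_eq, Finset.mem_univ, if_true]

lemma pairCoord_int_D {y : (Fin 12 → ℚ) × (Fin 12 → ℚ)}
    (hy : y ∈ (latD 12).prod (latD 12)) : ∃ m : Fin 2 × Fin 12 → ℤ,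
      ∀ p, pairCoord y p = m p := by
  obtain ⟨⟨h1, -⟩, ⟨h2, -⟩⟩ := hy
  have : ∀ p, ∃ m : ℤ, pairCoord y p = m := by
    intro p
    by_cases h : p.1 = 0
    · simpa [pairCoord, h] using h1 p.2
    · simpa [pairCoord, h] using h2 p.2
  choose m hm using this
  exact ⟨m, hm⟩

lemma two_basis_mem_D (p : Fin 2 × Fin 12) :
    (2 : ℤ) • pairBasis p ∈ (latD 12).prod (latD 12) := by
  have key : (2 : ℤ) • (Pi.single p.2 1 : Fin 12 → ℚ) ∈ latD 12 := by
    refine ⟨fun i => ?_, 1, ?_⟩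
    · refine ⟨2 * (if i = p.2 then 1 else 0), ?_⟩
      by_cases h : i = p.2 <;> simp [h]
    · simp [← Finset.mul_sum]
  by_cases h : p.1 = 0
  · simp only [pairBasis, h, if_true]
    exact ⟨key, by simp⟩
  · simp only [pairBasis, h, if_false]
    exact ⟨by simp, key⟩

lemma basis_add_mem_D (s : Fin 2) (i j : Fin 12) (c : ℤ) (hc : c = 1 ∨ c = -1) :
    pairBasis (s, i) + c • pairBasis (s, j) ∈ (latD 12).prod (latD 12) := by
  have key : (Pi.single i 1 : Fin 12 → ℚ) + c • Pi.single j 1 ∈ latD 12 := by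
    refine ⟨fun k => ?_, ?_⟩
    · refine ⟨(if k = i then 1 else 0) + c * (if k = j then 1 else 0), ?_⟩
      by_cases h : k = i <;> by_cases h' : k = j <;> simp [Pi.single_apply, h, h']
    · simp only [Pi.add_apply, Finset.sum_add_distrib, Pi.smul_apply, ← Finset.smul_sum,
        Finset.sum_pi_single', Finset.mem_univ, if_true]
      rcases hc with rfl | rfl
      · exact ⟨1, by norm_num⟩
      · exact ⟨0, by norm_num⟩
  by_cases h : s = 0
  · simp only [pairBasis, h, if_true]
    exact ⟨by simpa using key, by simp⟩
  · simp only [pairBasis, h, if_false]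
    exact ⟨by simp, by simpa using key⟩

lemma rootSublattice_le (B : V →ₗ[ℚ] V →ₗ[ℚ] ℚ) (E : Submodule ℤ V) :
    rootSublattice B E ≤ E :=
  Submodule.span_le.2 fun _ hv => hv.1

/-- The orthonormal frame attached to a root sublattice of type `D₁₂⊕D₁₂`. -/
lemma exists_frame (B : V →ₗ[ℚ] V →ₗ[ℚ] ℚ) (E : Submodule ℤ V)
    (hr : LatticeIsometric (fun x y => B x y) (prodForm (stdDot 12) (stdDot 12))
      (rootSublattice B E) ((latD 12).prod (latD 12))) :
    ∃ e : Fin 2 × Fin 12 → V, (∀ p q, B (e p) (e q) = if p = q then 1 else 0) ∧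
      (∀ x ∈ E, B x x = 2 → ∃ m : Fin 2 × Fin 12 → ℤ, x = ∑ p, (m p : ℚ) • e p) ∧
      (∀ s i j, e (s, i) + e (s, j) ∈ E) ∧ (∀ s i j, e (s, i) - e (s, j) ∈ E) := by
  obtain ⟨f, hf⟩ := hr
  let d : Fin 2 × Fin 12 → V := fun p => (f.symm ⟨_, two_basis_mem_D p⟩ : rootSublattice B E)
  have hd : ∀ p q, B (d p) (d q) = if p = q then 4 else 0 := by
    intro p q
    have h := hf (f.symm ⟨_, two_basis_mem_D p⟩) (f.symm ⟨_, two_basis_mem_D q⟩)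
    simp only [LinearEquiv.apply_symm_apply] at h
    change B _ _ = _
    rw [← h, prodForm_eq]
    have : ∀ p r : Fin 2 × Fin 12, pairCoord ((2 : ℤ) • pairBasis p) r
        = if p = r then 2 else 0 := by
      intro p r
      change pairCoordHom r _ = _
      rw [map_zsmul]
      change (2 : ℤ) • pairCoord (pairBasis p) r = _
      rw [pairCoord_basis]
      split_ifs <;> simp
    simp only [this]
    by_cases hpq : p = q
    · subst hpq
      simp
      norm_num
    · simp [hpq, Ne.symm hpq]
  have key : ∀ x : rootSublattice B E, ∀ m : Fin 2 × Fin 12 → ℤ,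
      ((f x : (Fin 12 → ℚ) × (Fin 12 → ℚ)) = ∑ p, m p • pairBasis p) →
      (x : V) = ∑ p, (m p : ℚ) • ((1 / 2 : ℚ) • d p) := by
    intro x m hx
    have h1 : (2 : ℤ) • f x = ∑ p, m p • (⟨_, two_basis_mem_D p⟩ :
        ((latD 12).prod (latD 12) : Submodule ℤ _)) := by
      apply Subtype.ext
      simp only [Submodule.coe_smul, hx, Submodule.coe_sum, Finset.smul_sum]
      exact Finset.sum_congr rfl fun p _ => smul_comm _ _ _
    have h2 := congrArg (fun z => ((f.symm z : rootSublattice B E) : V)) h1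
    simp only [map_sum, map_smul, LinearEquiv.symm_apply_apply, Submodule.coe_smul,
      Submodule.coe_sum] at h2
    change (2 : ℤ) • (x : V) = ∑ p, m p • d p at h2
    have h3 : (x : V) = (1 / 2 : ℚ) • ((2 : ℤ) • (x : V)) := by
      rw [← Int.cast_smul_eq_zsmul ℚ, smul_smul]
      norm_num
    rw [h3, h2, Finset.smul_sum]
    refine Finset.sum_congr rfl fun p _ => ?_
    rw [← Int.cast_smul_eq_zsmul ℚ, smul_comm]
  have hmem : ∀ (s : Fin 2) (i j : Fin 12) (c : ℤ), (c = 1 ∨ c = -1) →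
      (1 / 2 : ℚ) • d (s, i) + (c : ℚ) • ((1 / 2 : ℚ) • d (s, j)) ∈ E := by
    intro s i j c hc
    have h := key (f.symm ⟨_, basis_add_mem_D s i j c hc⟩)
      (fun p => (if p = (s, i) then 1 else 0) + c * (if p = (s, j) then 1 else 0)) (by
        simp only [LinearEquiv.apply_symm_apply, add_smul, Finset.sum_add_distrib, mul_smul,
          ← Finset.smul_sum]
        simp only [ite_smul, one_smul, zero_smul, Finset.sum_ite_eq', Finset.sum_ite_eq,
          Finset.mem_univ, if_true])
    have h4 := rootSublattice_le B E (f.symm ⟨_, basis_add_mem_D s i j c hc⟩).2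
    rw [h] at h4
    push_cast at h4
    simpa [add_smul, Finset.sum_add_distrib, mul_smul, ← Finset.smul_sum, ite_smul] using h4
  refine ⟨fun p => (1 / 2 : ℚ) • d p, ?_, ?_, ?_, ?_⟩
  · intro p q
    simp only [map_smul, LinearMap.smul_apply, hd]
    split_ifs <;> norm_num
  · intro x hx h2
    obtain ⟨m, hm⟩ := pairCoord_int_D (f ⟨x, Submodule.subset_span ⟨hx, h2⟩⟩).2
    exact ⟨m, key ⟨x, Submodule.subset_span ⟨hx, h2⟩⟩ m (pairCoord_sum _ m hm)⟩
  · intro s i j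
    simpa using hmem s i j 1 (Or.inl rfl)
  · intro s i j
    simpa [sub_eq_add_neg] using hmem s i j (-1) (Or.inr rfl)

/-- Integer coordinates on the roots for a root sublattice of type `A₁₂⊕A₁₂`. -/
lemma exists_coords (B : V →ₗ[ℚ] V →ₗ[ℚ] ℚ) (E : Submodule ℤ V)
    (hr : LatticeIsometric (fun x y => B x y) (prodForm (stdDot 13) (stdDot 13))
      (rootSublattice B E) ((latA 12).prod (latA 12))) :
    ∃ φ : rootSublattice B E → Fin 2 × Fin 13 → ℤ,
      (∀ x y : rootSublattice B E, B (x : V) (y : V) = ((∑ p, φ x p * φ y p : ℤ) : ℚ)) ∧ ∀ x s, ∑ i, φ x (s, i) = 0 := by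
  obtain ⟨f, hf⟩ := hr
  have h : ∀ x : rootSublattice B E, ∃ m : Fin 2 × Fin 13 → ℤ,
      ∀ p, pairCoord (f x : (Fin 13 → ℚ) × (Fin 13 → ℚ)) p = m p := by
    intro x
    obtain ⟨⟨h1, -⟩, ⟨h2, -⟩⟩ := (f x).2
    have : ∀ p, ∃ m : ℤ, pairCoord (f x : (Fin 13 → ℚ) × (Fin 13 → ℚ)) p = m := by
      intro p
      by_cases h : p.1 = 0
      · simpa [pairCoord, h] using h1 p.2
      · simpa [pairCoord, h] using h2 p.2
    choose m hm using this
    exact ⟨m, hm⟩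
  choose φ hφ using h
  refine ⟨φ, fun x y => ?_, fun x s => ?_⟩
  · refine (hf x y).symm.trans ?_
    rw [prodForm_eq]
    push_cast
    simp only [hφ]
  · have : ((∑ i, φ x (s, i) : ℤ) : ℚ) = 0 := by
      push_cast
      simp only [← hφ]
      obtain ⟨⟨-, h1⟩, ⟨-, h2⟩⟩ := (f x).2
      by_cases h : s = 0
      · simpa [pairCoord, h] using h1
      · simpa [pairCoord, h] using h2
    exact_mod_cast this

/-- Norm-two vectors of `A₁₂⊕A₁₂` are differences of two basis vectors. -/
lemma root_shape (v : Fin 2 × Fin 13 → ℤ) (h2 : ∑ p, v p * v p = 2)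
    (h0 : ∀ s, ∑ i, v (s, i) = 0) :
    ∃ p q, p ≠ q ∧ v p = 1 ∧ v q = -1 ∧ ∀ r, r ≠ p → r ≠ q → v r = 0 := by
  have hne : ∃ p, v p ≠ 0 := by
    by_contra! h
    simp [h] at h2
  obtain ⟨⟨s, i⟩, hsi⟩ := hne
  have hpos : ∃ a, 0 < v (s, a) := by
    by_contra! h
    have := (Finset.sum_eq_zero_iff_of_nonpos (fun a _ => h a)).1 (h0 s) i (Finset.mem_univ _)
    exact hsi this
  have hneg : ∃ b, v (s, b) < 0 := by
    by_contra! h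
    have := (Finset.sum_eq_zero_iff_of_nonneg (fun a _ => h a)).1 (h0 s) i (Finset.mem_univ _)
    exact hsi this
  obtain ⟨a, ha⟩ := hpos
  obtain ⟨b, hb⟩ := hneg
  have hab : (s, a) ≠ (s, b) := by
    intro h
    rw [h] at ha
    omega
  have hsub : ∀ T : Finset (Fin 2 × Fin 13), ∑ p ∈ T, v p * v p ≤ 2 := by
    intro T
    rw [← h2]
    exact Finset.sum_le_sum_of_subset_of_nonneg (Finset.subset_univ _)
      fun p _ _ => mul_self_nonneg _
  have hT := hsub {(s, a), (s, b)}
  rw [Finset.sum_pair hab] at hT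
  refine ⟨(s, a), (s, b), hab, by nlinarith, by nlinarith, ?_⟩
  intro r hr hr'
  have hT := hsub {r, (s, a), (s, b)}
  rw [Finset.sum_insert (by simp [hr, hr']), Finset.sum_pair hab] at hT
  by_contra h
  have : 0 < v r * v r := mul_self_pos.2 h
  nlinarith

lemma sum_root {v w : Fin 2 × Fin 13 → ℤ} {p q : Fin 2 × Fin 13} (hpq : p ≠ q)
    (hp : v p = 1) (hq : v q = -1) (h : ∀ r, r ≠ p → r ≠ q → v r = 0) :
    ∑ r, v r * w r = w p - w q := by
  have : ∑ r ∈ {p, q}, v r * w r = ∑ r, v r * w r := by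
    apply Finset.sum_subset (Finset.subset_univ _)
    intro r _ hr
    simp only [Finset.mem_insert, Finset.mem_singleton, not_or] at hr
    rw [h r hr.1 hr.2, zero_mul]
  rw [← this, Finset.sum_pair hpq, hp, hq]
  ring

lemma root_disjoint (v w : Fin 2 × Fin 13 → ℤ) (h2 : ∑ p, v p * v p = 2)
    (h0 : ∀ s, ∑ i, v (s, i) = 0) (h2' : ∑ p, w p * w p = 2)
    (h0' : ∀ s, ∑ i, w (s, i) = 0) (hvw : ∑ p, v p * w p = 0) (r) :
    v r = 0 ∨ w r = 0 := by
  obtain ⟨p, q, hpq, hp, hq, h⟩ := root_shape v h2 h0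
  obtain ⟨p', q', hpq', hp', hq', h'⟩ := root_shape w h2' h0'
  rw [sum_root hpq hp hq h] at hvw
  grind

/-- A lattice with root sublattice `A₁₂⊕A₁₂` contains no `D₄` configuration of roots. -/
lemma no_D4 (B : V →ₗ[ℚ] V →ₗ[ℚ] ℚ) (E : Submodule ℤ V)
    (hr : LatticeIsometric (fun x y => B x y) (prodForm (stdDot 13) (stdDot 13))
      (rootSublattice B E) ((latA 12).prod (latA 12)))
    (r0 r1 r2 r3 : V) (m0 : r0 ∈ E) (m1 : r1 ∈ E) (m2 : r2 ∈ E) (m3 : r3 ∈ E)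
    (n0 : B r0 r0 = 2) (n1 : B r1 r1 = 2) (n2 : B r2 r2 = 2) (n3 : B r3 r3 = 2)
    (o12 : B r1 r2 = 0) (o13 : B r1 r3 = 0) (o23 : B r2 r3 = 0)
    (c1 : B r0 r1 ≠ 0) (c2 : B r0 r2 ≠ 0) (c3 : B r0 r3 ≠ 0) : False := by
  obtain ⟨φ, hφ, hs⟩ := exists_coords B E hr
  let x0 : rootSublattice B E := ⟨r0, Submodule.subset_span ⟨m0, n0⟩⟩
  let x1 : rootSublattice B E := ⟨r1, Submodule.subset_span ⟨m1, n1⟩⟩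
  let x2 : rootSublattice B E := ⟨r2, Submodule.subset_span ⟨m2, n2⟩⟩
  let x3 : rootSublattice B E := ⟨r3, Submodule.subset_span ⟨m3, n3⟩⟩
  have e0 := hφ x0 x0
  have e1 := hφ x1 x1
  have e2 := hφ x2 x2
  have e3 := hφ x3 x3
  have e12 := hφ x1 x2
  have e13 := hφ x1 x3
  have e23 := hφ x2 x3
  have e01 := hφ x0 x1
  have e02 := hφ x0 x2
  have e03 := hφ x0 x3
  simp only [x0, x1, x2, x3, n0, n1, n2, n3, o12, o13, o23] at e0 e1 e2 e3 e12 e13 e23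
  change B r0 r1 = _ at e01
  change B r0 r2 = _ at e02
  change B r0 r3 = _ at e03
  have d12 := root_disjoint (φ x1) (φ x2) (by exact_mod_cast e1.symm) (hs _)
    (by exact_mod_cast e2.symm) (hs _) (by exact_mod_cast e12.symm)
  have d13 := root_disjoint (φ x1) (φ x3) (by exact_mod_cast e1.symm) (hs _)
    (by exact_mod_cast e3.symm) (hs _) (by exact_mod_cast e13.symm)
  have d23 := root_disjoint (φ x2) (φ x3) (by exact_mod_cast e2.symm) (hs _)
    (by exact_mod_cast e3.symm) (hs _) (by exact_mod_cast e23.symm)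
  obtain ⟨p, q, hpq, hp, hq, h⟩ := root_shape (φ x0) (by exact_mod_cast e0.symm) (hs _)
  rw [sum_root hpq hp hq h] at e01 e02 e03
  have f1 : φ x1 p - φ x1 q ≠ 0 := fun h => c1 (by rw [e01, h]; simp)
  have f2 : φ x2 p - φ x2 q ≠ 0 := fun h => c2 (by rw [e02, h]; simp)
  have f3 : φ x3 p - φ x3 q ≠ 0 := fun h => c3 (by rw [e03, h]; simp)
  have := d12 p
  have := d12 q
  have := d13 p
  have := d13 q
  have := d23 p
  have := d23 q
  omega

/-- Even-norm vectors of `N` lie in every even neighbor of `N`. -/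
lemma even_mem (B : V →ₗ[ℚ] V →ₗ[ℚ] ℚ) (hB : IsPosDefSymm B) (N E : Submodule ℤ V)
    (hN : IsOddNiemeier B N) (hE : IsEvenNeighbor B N E) (x : V) (hx : x ∈ N)
    (hx2 : ∃ n : ℤ, B x x = 2 * n) : x ∈ E := by
  obtain ⟨hIntegral, -, ⟨v, hv, k, hk⟩, -⟩ := hN
  obtain ⟨-, -, heven, ⟨-, a, ha, hna, hall⟩, -⟩ := hE
  have hnorm : ∀ y ∈ N, ∀ z ∈ N, ∃ n : ℤ, B (y - z) (y - z) = B y y + B z z - 2 * n := by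
    intro y hy z hz
    obtain ⟨n, hn⟩ := hIntegral.integral hy z hz
    refine ⟨n, ?_⟩
    simp only [map_sub, LinearMap.sub_apply, hB.1 z y, hn]
    ring
  have hva : v - a ∈ E := by
    rcases hall v hv with h | h
    · obtain ⟨n, hn⟩ := heven v h.2
      rw [hk] at hn
      have : 2 * k + 1 = 2 * n := by exact_mod_cast hn
      omega
    · exact h.2
  rcases hall x hx with h | h
  · exact h.2
  · exfalso
    obtain ⟨n1, h1⟩ := hnorm v hv a ha
    obtain ⟨n2, h2⟩ := heven _ hva
    obtain ⟨n3, h3⟩ := hnorm x hx a ha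
    obtain ⟨n4, h4⟩ := heven _ h.2
    obtain ⟨n5, h5⟩ := hx2
    have : (2 * k + 1 + (2 * n4 - 2 * n5 + 2 * n3) - 2 * n1 : ℚ) = 2 * n2 := by
      linarith
    have : 2 * k + 1 + (2 * n4 - 2 * n5 + 2 * n3) - 2 * n1 = 2 * n2 := by exact_mod_cast this
    omega

lemma index_two_add {D L : Submodule ℤ V} (h : IndexTwo D L) {x y : V} (hx : x ∈ L) (hy : y ∈ L)
    (hx' : x ∉ D) (hy' : y ∉ D) : x + y ∈ D ∧ x - y ∈ D := by
  obtain ⟨hle, a, ha, haD, hall⟩ := h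
  have h1 := (hall x hx).resolve_left hx'
  have h2 := (hall y hy).resolve_left hy'
  have hsub : x - y ∈ D := by
    have := D.sub_mem h1 h2
    simpa using this
  have h2y : y + y ∈ D := by
    rcases hall (y + y) (L.add_mem hy hy) with h | h
    · exact h
    · exfalso
      apply hy'
      have := D.sub_mem h h2
      have e : y + y - a - (y - a) = y := by abel
      rwa [e] at this
  refine ⟨?_, hsub⟩
  have := D.add_mem hsub h2y
  have e : x - y + (y + y) = x + y := by abel
  rwa [e] at this

lemma index_two_double {D L : Submodule ℤ V} (h : IndexTwo D L) {x : V} (hx : x ∈ L) :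
    x + x ∈ D := by
  by_cases hx' : x ∈ D
  · exact D.add_mem hx' hx'
  · exact (index_two_add h hx hx hx' hx').1

lemma four_of_twelve (c : Fin 12 → Bool) : ∃ g : Fin 4 → Fin 12, Function.Injective g ∧
    ∀ a b, c (g a) = c (g b) := by
  obtain ⟨b, hb⟩ := Fintype.exists_lt_card_fiber_of_mul_lt_card (f := c) (n := 3) (by simp)
  obtain ⟨T, hT, hT4⟩ := Finset.exists_subset_card_eq (n := 4) (Nat.succ_le_of_lt hb)
  · refine ⟨T.orderEmbOfFin hT4, (T.orderEmbOfFin hT4).injective, fun x y => ?_⟩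
    have h1 := hT (T.orderEmbOfFin_mem hT4 x)
    have h2 := hT (T.orderEmbOfFin_mem hT4 y)
    simp only [Finset.mem_filter] at h1 h2
    rw [h1.2, h2.2]

/-- No vector `2e` of the frame lies in `N`. -/
lemma two_frame_not_mem (B : V →ₗ[ℚ] V →ₗ[ℚ] ℚ) (hB : IsPosDefSymm B)
    (N E₁ E₂ : Submodule ℤ V) (hN : IsOddNiemeier B N)
    (hE₁ : IsEvenNeighbor B N E₁) (hE₂ : IsEvenNeighbor B N E₂)
    (hr₂ : LatticeIsometric (fun x y => B x y) (prodForm (stdDot 13) (stdDot 13))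
      (rootSublattice B E₂) ((latA 12).prod (latA 12)))
    (e : Fin 2 × Fin 12 → V) (he : ∀ p q, B (e p) (e q) = if p = q then 1 else 0)
    (hadd : ∀ s i j, e (s, i) + e (s, j) ∈ E₁) (hsub : ∀ s i j, e (s, i) - e (s, j) ∈ E₁)
    (p : Fin 2 × Fin 12) : e p + e p ∉ N := by
  classical
  intro hp
  obtain ⟨s, j⟩ := p
  have hidx : IndexTwo (N ⊓ E₁) E₁ := hE₁.2.2.2.2
  have hall : ∀ i, e (s, i) + e (s, i) ∈ N := by
    intro i
    have h := (index_two_double hidx (hsub s i j)).1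
    have h' := N.add_mem h hp
    have eq : e (s, i) - e (s, j) + (e (s, i) - e (s, j)) + (e (s, j) + e (s, j))
        = e (s, i) + e (s, i) := by abel
    rwa [eq] at h'
  obtain ⟨g, hg, hc⟩ := four_of_twelve (fun i => decide (e (s, 0) - e (s, i) ∈ N))
  have hdiff : ∀ a b, e (s, g a) - e (s, g b) ∈ N := by
    intro a b
    have h := hc a b
    simp only [decide_eq_decide] at h
    have eq : (e (s, 0) - e (s, g b)) - (e (s, 0) - e (s, g a)) = e (s, g a) - e (s, g b) := by
      abel
    rw [← eq]
    by_cases ha : e (s, 0) - e (s, g a) ∈ N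
    · exact N.sub_mem (h.1 ha) ha
    · exact (index_two_add hidx (hsub s 0 (g b)) (hsub s 0 (g a))
        (fun h' => ha (h.2 h'.1)) (fun h' => ha h'.1)).2.1
  have hsum : ∀ a b, e (s, g a) + e (s, g b) ∈ N := by
    intro a b
    have h' := N.add_mem (hdiff a b) (hall (g b))
    have eq : e (s, g a) - e (s, g b) + (e (s, g b) + e (s, g b))
        = e (s, g a) + e (s, g b) := by abel
    rwa [eq] at h'
  have h01 : g 0 ≠ g 1 := hg.ne (by decide)
  have h02 : g 0 ≠ g 2 := hg.ne (by decide)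
  have h03 : g 0 ≠ g 3 := hg.ne (by decide)
  have h12 : g 1 ≠ g 2 := hg.ne (by decide)
  have h13 : g 1 ≠ g 3 := hg.ne (by decide)
  have h23 : g 2 ≠ g 3 := hg.ne (by decide)
  have nd : ∀ i j, i ≠ j → B (e (s, i) - e (s, j)) (e (s, i) - e (s, j)) = 2 := by
    intro i j hij
    simp [he, hij, hij.symm]
    norm_num
  have ns : ∀ i j, i ≠ j → B (e (s, i) + e (s, j)) (e (s, i) + e (s, j)) = 2 := by
    intro i j hij
    simp [he, hij, hij.symm]
    norm_num
  have mem : ∀ x ∈ N, B x x = 2 → x ∈ E₂ := fun x hx h2 =>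
    even_mem B hB N E₂ hN hE₂ x hx ⟨1, by rw [h2]; norm_num⟩
  refine no_D4 B E₂ hr₂ (e (s, g 1) - e (s, g 2)) (e (s, g 0) - e (s, g 1))
    (e (s, g 2) - e (s, g 3)) (e (s, g 2) + e (s, g 3))
    (mem _ (hdiff _ _) (nd _ _ h12)) (mem _ (hdiff _ _) (nd _ _ h01))
    (mem _ (hdiff _ _) (nd _ _ h23)) (mem _ (hsum _ _) (ns _ _ h23))
    (nd _ _ h12) (nd _ _ h01) (nd _ _ h23) (ns _ _ h23) ?_ ?_ ?_ ?_ ?_ ?_ <;>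
  simp [he, h01, h02, h03, h12, h13, h23, h01.symm, h02.symm, h03.symm, h12.symm, h13.symm,
    h23.symm]

/-- Bessel's inequality for the frame. -/
lemma bessel (B : V →ₗ[ℚ] V →ₗ[ℚ] ℚ) (hB : IsPosDefSymm B)
    (e : Fin 2 × Fin 12 → V) (he : ∀ p q, B (e p) (e q) = if p = q then 1 else 0) (b : V) :
    ∑ p, B b (e p) * B b (e p) ≤ B b b := by
  set w := b - ∑ p, B b (e p) • e p with hw
  have h0 : 0 ≤ B w w := by
    by_cases h : w = 0
    · simp [h]
    · exact (hB.2 w h).le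
  have h1 : B w w = B b b - ∑ p, B b (e p) * B b (e p) := by
    have h2 : ∀ q, B w (e q) = 0 := by
      intro q
      simp [hw, he, map_sum, LinearMap.sum_apply]
    have h3 : B w w = B w b := by
      conv_lhs => rw [hw]
      rw [← hw, map_sub, map_sum]
      simp [h2]
    rw [h3, hw]
    simp [map_sum, LinearMap.sum_apply, hB.1 (e _) b]
  linarith

/-- If `b` has half-odd coordinates and norm six, no integral norm-two vector pairs to two. -/
lemma final_step (B : V →ₗ[ℚ] V →ₗ[ℚ] ℚ) (hB : IsPosDefSymm B)
    (e : Fin 2 × Fin 12 → V) (he : ∀ p q, B (e p) (e q) = if p = q then 1 else 0)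
    (b h : V) (m n : Fin 2 × Fin 12 → ℤ) (hh : h = ∑ p, (m p : ℚ) • e p) (h2 : B h h = 2)
    (hb : B b b = 6) (hn : ∀ p, 2 * B b (e p) = n p) (hodd : ∀ p, n p % 2 = 1)
    (hhb : B h b = 2) : False := by
  have hbe : ∀ p, B b (e p) = n p / 2 := fun p => by rw [← hn]; ring
  have hs : ∑ p, n p * n p ≤ 24 := by
    have h := bessel B hB e he b
    rw [hb] at h
    simp only [hbe] at h
    have h' : ∑ p, (n p / 2 * (n p / 2) : ℚ) = (∑ p, (n p * n p : ℚ)) / 4 := by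
      rw [Finset.sum_div]
      exact Finset.sum_congr rfl fun p _ => by ring
    rw [h'] at h
    have : (∑ p, (n p * n p : ℚ)) ≤ 24 := by linarith
    exact_mod_cast this
  have hge : ∀ p, 0 ≤ n p * n p - 1 := by
    intro p
    have h1 : n p ≠ 0 := by
      have := hodd p
      omega
    have := mul_self_pos.2 h1
    omega
  have hz : ∑ p, (n p * n p - 1) = 0 := by
    apply le_antisymm
    · rw [Finset.sum_sub_distrib]
      simp
      linarith
    · exact Finset.sum_nonneg fun p _ => hge p
  have hone : ∀ p, n p * n p = 1 := by
    intro p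
    have := (Finset.sum_eq_zero_iff_of_nonneg (fun p _ => hge p)).1 hz p (Finset.mem_univ _)
    omega
  have hm2 : ∑ p, m p * m p = 2 := by
    have : (∑ p, (m p * m p : ℚ)) = 2 := by
      rw [← h2, hh]
      simp [map_sum, LinearMap.sum_apply, he]
    exact_mod_cast this
  have hmn : ∑ p, m p * n p = 4 := by
    have : (∑ p, (m p * n p : ℚ)) = 4 := by
      have h5 : B h b = ∑ p, (m p * n p : ℚ) / 2 := by
        rw [hh]
        simp only [map_sum, LinearMap.sum_apply, map_smul, LinearMap.smul_apply, smul_eq_mul,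
          hB.1 (e _) b, hbe]
        exact Finset.sum_congr rfl fun p _ => by ring
      rw [hhb, ← Finset.sum_div] at h5
      linarith
    exact_mod_cast this
  have hle : ∑ p, m p * n p ≤ ∑ p, m p * m p := by
    apply Finset.sum_le_sum
    intro p _
    rcases mul_self_eq_one_iff.1 (hone p) with h | h <;> rw [h]
    · rcases le_or_gt (m p) 0 with h' | h' <;> nlinarith
    · rcases lt_or_ge (m p) 0 with h' | h' <;> nlinarith
  omega

/-- An odd Niemeier lattice of minimum norm 2 whose two even neighbors have root
sublattices isometric to `D₁₂⊕D₁₂` and `A₁₂⊕A₁₂` respectively does not contain `L⁺`. -/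
theorem stmt3 {V : Type*} [AddCommGroup V] [Module ℚ V]
    (B : V →ₗ[ℚ] V →ₗ[ℚ] ℚ) (hB : IsPosDefSymm B)
    (N : Submodule ℤ V) (hN : IsOddNiemeier B N)
    (hmin : HasMinNorm B N 2)
    (E₁ E₂ : Submodule ℤ V) (hne : E₁ ≠ E₂)
    (hE₁ : IsEvenNeighbor B N E₁) (hE₂ : IsEvenNeighbor B N E₂)
    (hr₁ : LatticeIsometric (fun x y => B x y) (prodForm (stdDot 12) (stdDot 12))
      (rootSublattice B E₁) ((latD 12).prod (latD 12)))
    (hr₂ : LatticeIsometric (fun x y => B x y) (prodForm (stdDot 13) (stdDot 13))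
      (rootSublattice B E₂) ((latA 12).prod (latA 12))) :
    ¬ ContainsLPlus B N := by
  rintro ⟨h, hhN, a, haN, hh2, hha, ha3, hao⟩
  obtain ⟨e, he, hroot, hadd, hsub⟩ := exists_frame B E₁ hr₁
  have hnot := two_frame_not_mem B hB N E₁ E₂ hN hE₁ hE₂ hr₂ e he hadd hsub
  have hidx : IndexTwo (N ⊓ E₁) E₁ := hE₁.2.2.2.2
  have haE : ∀ i, a i ∉ E₁ := by
    intro i hi
    obtain ⟨n, hn⟩ := hE₁.2.2.1 _ hi
    rw [ha3] at hn
    have : (3 : ℤ) = 2 * n := by exact_mod_cast hn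
    omega
  have hIntegral : ∀ x ∈ N, ∀ y ∈ N, ∃ n : ℤ, B x y = n := fun x hx y hy => hN.1.integral hx y hy
  have hcoord : ∀ i p, ∃ m : ℤ, 4 * B (a i) (e p) = m ∧ m % 2 = 1 := by
    intro i p
    have h2E : e p + e p ∈ E₁ := hadd p.1 p.2 p.2
    obtain ⟨m, hm⟩ := hIntegral _ (haN i) _ (index_two_double hidx h2E).1
    have hm4 : 4 * B (a i) (e p) = m := by
      rw [← hm]
      simp only [map_add]
      ring
    refine ⟨m, hm4, ?_⟩
    by_contra hmo
    apply haE i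
    rw [hE₁.2.1]
    have hk : ∃ k : ℤ, B (a i) (e p + e p) = k := by
      refine ⟨m / 2, ?_⟩
      have : m = 2 * (m / 2) := by omega
      have h' : (m : ℚ) = 2 * ((m / 2 : ℤ) : ℚ) := by exact_mod_cast this
      rw [map_add]
      linarith
    intro y hy
    by_cases hyN : y ∈ N
    · exact hIntegral _ (haN i) _ hyN
    · obtain ⟨k, hk⟩ := hk
      have hd := (index_two_add hidx hy h2E (fun h' => hyN h'.1) (fun h' => hnot p h'.1)).2.1
      obtain ⟨l, hl⟩ := hIntegral _ (haN i) _ hd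
      refine ⟨l + k, ?_⟩
      rw [map_sub] at hl
      push_cast
      linarith
  choose m hm hmo using hcoord
  have hpair : ∀ s i j, (∀ k, (m k (s, i) - m k (s, j)) % 4 = 0) ∨
      (∀ k, (m k (s, i) + m k (s, j)) % 4 = 0) := by
    intro s i j
    by_cases h1 : e (s, i) - e (s, j) ∈ N
    · left
      intro k
      obtain ⟨n, hn⟩ := hIntegral _ (haN k) _ h1
      have : ((m k (s, i) - m k (s, j) : ℤ) : ℚ) = ((4 * n : ℤ) : ℚ) := by
        push_cast
        rw [← hm, ← hm, ← hn, map_sub]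
        ring
      have := Int.cast_injective this
      omega
    · right
      have h2 : e (s, i) + e (s, j) ∈ N := by
        by_contra h2
        have h3 := (index_two_add hidx (hadd s i j) (hsub s i j) (fun h' => h2 h'.1)
          (fun h' => h1 h'.1)).1.1
        have eq : e (s, i) + e (s, j) + (e (s, i) - e (s, j)) = e (s, i) + e (s, i) := by abel
        rw [eq] at h3
        exact hnot _ h3
      intro k
      obtain ⟨n, hn⟩ := hIntegral _ (haN k) _ h2
      have : ((m k (s, i) + m k (s, j) : ℤ) : ℚ) = ((4 * n : ℤ) : ℚ) := by
        push_cast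
        rw [← hm, ← hm, ← hn, map_add]
        ring
      have := Int.cast_injective this
      omega
  obtain ⟨x, y, hxy, hc⟩ := Fintype.exists_ne_map_eq_of_card_lt
    (fun k : Fin 5 => (decide (m k (0, 0) % 4 = 1), decide (m k (1, 0) % 4 = 1))) (by simp)
  simp only [Prod.mk.injEq, decide_eq_decide] at hc
  have hcong : ∀ p, (m x p - m y p) % 4 = 0 := by
    rintro ⟨s, j⟩
    have h0 : (m x (s, 0) - m y (s, 0)) % 4 = 0 := by
      have h1 := hmo x (s, 0)
      have h2 := hmo y (s, 0)
      have h3 : m x (s, 0) % 4 = 1 ↔ m y (s, 0) % 4 = 1 := by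
        fin_cases s
        · exact hc.1
        · exact hc.2
      omega
    rcases hpair s 0 j with h | h
    · have := h x
      have := h y
      omega
    · have := h x
      have := h y
      omega
  obtain ⟨c, hc⟩ := hroot h (even_mem B hB N E₁ hN hE₁ h hhN ⟨1, by rw [hh2]; norm_num⟩) hh2
  refine final_step B hB e he (a x + a y) h c (fun p => (m x p + m y p) / 2) hc hh2 ?_ ?_ ?_ ?_
  · simp only [map_add, LinearMap.add_apply, ha3, hao x y hxy, hao y x hxy.symm]
    norm_num
  · intro p
    have h1 := hmo x p
    have h2 := hmo y p
    have h3 : m x p + m y p = 2 * ((m x p + m y p) / 2) := by omega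
    have h4 : (m x p + m y p : ℚ) = 2 * (((m x p + m y p) / 2 : ℤ) : ℚ) := by exact_mod_cast h3
    rw [← hm, ← hm] at h4
    rw [map_add, LinearMap.add_apply]
    linarith
  · intro p
    have h1 := hmo x p
    have h2 := hmo y p
    have h3 := hcong p
    change (m x p + m y p) / 2 % 2 = 1
    omega
  · rw [map_add, hha, hha]
    norm_num

end Niemeier
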